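/- arXiv:1912.09775 — 3 statements merged into one kernel-verified Lean document; each statement's English description precedes it below -/
import Mathlib

section
/- Let the D-way tensor A with multilinear rank (S_1,…,S_D) be given by a tensor train decomposition with TT-ranks R_2,…,R_D (and R_1 = R_{D+1} = 1) in site-d-mixed-canonical form. Then S_d = rank(A_{<d>}) = rank(A_d) ≤ min(I_d, R_d R_{d+1}) ≤ I_d. -/
/-!
Grouping the cores to the left and to the right of site `d` writes the matricization as a product
`A_{<d>} = A_d * M`, where `M` is the Kronecker product of the right interface matrix (contraction
of the cores `d+1, …, D`) and the left interface matrix (contraction of the cores `1, …, d-1`).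
Orthogonality of these cores propagates to the interface matrices (`leftPart_orthonormal`,
`rightPart_orthonormal`), the boundary ranks being `1`, so `M * Mᵀ = 1`. Hence also
`A_d = A_{<d>} * Mᵀ`, and both matrices have the same rank.

The factorization rests on the fact that the contraction of the left and right parts at a cut `m`
does not depend on `m`, and at the leftmost cut equals the full tensor-train sum (`tt_split`).
-/

open scoped Matrix Kronecker

variable {D : ℕ}

/-- `A` admits the tensor-train decomposition with ranks `R` and cores `G`. -/
def IsTT (I : Fin D → ℕ) (R : Fin (D + 1) → ℕ)
    (G : ∀ d : Fin D, Fin (R d.castSucc) → Fin (I d) → Fin (R d.succ) → ℝ)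
    (A : (∀ d, Fin (I d)) → ℝ) : Prop :=
  ∀ i : ∀ d, Fin (I d),
    A i = ∑ r : ∀ k : Fin (D + 1), Fin (R k),
      ∏ d : Fin D, G d (r d.castSucc) (i d) (r d.succ)

def coreMat (I : Fin D → ℕ) (R : Fin (D + 1) → ℕ)
    (G : ∀ d : Fin D, Fin (R d.castSucc) → Fin (I d) → Fin (R d.succ) → ℝ)
    (d : Fin D) :
    Matrix (Fin (I d)) (Fin (R d.succ) × Fin (R d.castSucc)) ℝ :=
  Matrix.of fun i p => G d p.2 i p.1

def pairedMatricization (I : Fin D → ℕ) (A : (∀ d, Fin (I d)) → ℝ) (d : Fin D) :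
    Matrix (Fin (I d))
      (((k : {k : Fin D // d.succ ≤ k.castSucc}) → Fin (I k.1)) ×
        ((k : {k : Fin D // k.castSucc < d.castSucc}) → Fin (I k.1))) ℝ :=
  Matrix.of fun i j =>
    A fun k =>
      if h : k.castSucc < d.castSucc then j.2 ⟨k, h⟩
      else if h' : d.succ ≤ k.castSucc then j.1 ⟨k, h'⟩
      else
        Fin.cast
          (congrArg I
            (by
              have h1 : d ≤ k := Fin.castSucc_le_castSucc_iff.mp (not_lt.mp h)
              have h2 : k ≤ d := Fin.castSucc_lt_succ_iff.mp (not_le.mp h')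
              exact le_antisymm h1 h2))
          i

def LeftOrtho (I : Fin D → ℕ) (R : Fin (D + 1) → ℕ)
    (G : ∀ d : Fin D, Fin (R d.castSucc) → Fin (I d) → Fin (R d.succ) → ℝ)
    (k : Fin D) : Prop :=
  (Matrix.of fun (p : Fin (R k.castSucc) × Fin (I k)) (r' : Fin (R k.succ)) =>
      G k p.1 p.2 r')ᵀ *
    (Matrix.of fun (p : Fin (R k.castSucc) × Fin (I k)) (r' : Fin (R k.succ)) =>
      G k p.1 p.2 r') = 1

def RightOrtho (I : Fin D → ℕ) (R : Fin (D + 1) → ℕ)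
    (G : ∀ d : Fin D, Fin (R d.castSucc) → Fin (I d) → Fin (R d.succ) → ℝ)
    (k : Fin D) : Prop :=
  (Matrix.of fun (r : Fin (R k.castSucc)) (p : Fin (I k) × Fin (R k.succ)) =>
      G k r p.1 p.2) *
    (Matrix.of fun (r : Fin (R k.castSucc)) (p : Fin (I k) × Fin (R k.succ)) =>
      G k r p.1 p.2)ᵀ = 1

def MixedCanonical (I : Fin D → ℕ) (R : Fin (D + 1) → ℕ)
    (G : ∀ d : Fin D, Fin (R d.castSucc) → Fin (I d) → Fin (R d.succ) → ℝ)
    (d : Fin D) : Prop :=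
  (∀ k : Fin D, k < d → LeftOrtho I R G k) ∧
  (∀ k : Fin D, d < k → RightOrtho I R G k)

/-! ### Right-to-left contraction of a chain of matrices -/

/-- The vector obtained by contracting the chain of matrices `g m, …, g (D-1)` with the all-ones
vector on the right. -/
noncomputable def tailSum {D : ℕ} (R : Fin (D + 1) → ℕ)
    (g : ∀ d : Fin D, Fin (R d.castSucc) → Fin (R d.succ) → ℝ) (m : Fin (D + 1)) :
    Fin (R m) → ℝ :=
  Fin.reverseInduction (motive := fun m => Fin (R m) → ℝ) (fun _ => 1)
    (fun k v a => ∑ b, g k a b * v b) m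

lemma tailSum_last {D : ℕ} (R : Fin (D + 1) → ℕ)
    (g : ∀ d : Fin D, Fin (R d.castSucc) → Fin (R d.succ) → ℝ) :
    tailSum R g (Fin.last D) = fun _ => 1 := by
  simp [tailSum]

lemma tailSum_castSucc {D : ℕ} (R : Fin (D + 1) → ℕ)
    (g : ∀ d : Fin D, Fin (R d.castSucc) → Fin (R d.succ) → ℝ) (k : Fin D) :
    tailSum R g k.castSucc = fun a => ∑ b, g k a b * tailSum R g k.succ b := by
  simp [tailSum]

lemma tailSum_succ {D : ℕ} (R : Fin (D + 2) → ℕ)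
    (g : ∀ d : Fin (D + 1), Fin (R d.castSucc) → Fin (R d.succ) → ℝ) (m : Fin (D + 1)) :
    tailSum R g m.succ =
      tailSum (fun k : Fin (D + 1) => R k.succ) (fun d => g d.succ) m := by
  induction m using Fin.reverseInduction with
  | last =>
    rw [tailSum_last]
    exact tailSum_last R g
  | cast k ih =>
    rw [tailSum_castSucc, ← ih]
    exact tailSum_castSucc R g k.succ

/-- The sum over all rank indices equals the iterated contraction. The weight `f` on the first
index is what makes the induction on the length of the chain go through. -/
lemma sum_chain_eq_tailSum {D : ℕ} (R : Fin (D + 1) → ℕ)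
    (g : ∀ d : Fin D, Fin (R d.castSucc) → Fin (R d.succ) → ℝ) (f : Fin (R 0) → ℝ) :
    ∑ r : ∀ k : Fin (D + 1), Fin (R k), f (r 0) * ∏ d : Fin D, g d (r d.castSucc) (r d.succ)
      = ∑ a, f a * tailSum R g 0 a := by
  induction D with
  | zero =>
    have h0 : tailSum R g 0 = fun _ => 1 := tailSum_last R g
    rw [h0, ← (Equiv.piUnique (fun k : Fin 1 => Fin (R k))).symm.sum_comp]
    simp
    rfl
  | succ D ih =>
    rw [← (Fin.consEquiv (fun k : Fin (D + 2) => Fin (R k))).sum_comp,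
      Fintype.sum_prod_type_right]
    have h := ih (fun k => R k.succ) (fun d => g d.succ) (fun b => ∑ a, f a * g 0 a b)
    have h0 : tailSum R g 0 = fun a => ∑ b, g 0 a b * tailSum R g (Fin.succ 0) b :=
      tailSum_castSucc R g 0
    rw [h0]
    simp only [tailSum_succ, Finset.mul_sum]
    simp only [Finset.sum_mul] at h
    refine Eq.trans (Finset.sum_congr rfl fun r _ => Finset.sum_congr rfl fun a _ => ?_)
      (h.trans ?_)
    · rw [Fin.prod_univ_succ, ← mul_assoc]
      rfl
    · rw [Finset.sum_comm]
      exact Finset.sum_congr rfl fun _ _ => Finset.sum_congr rfl fun _ _ => mul_assoc _ _ _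

/-! ### Interface matrices -/

/-- The left interface matrix at the cut `m`: the contraction of all cores at sites before `m`,
as a function of the physical indices at these sites and of the rank index at `m`. -/
noncomputable def leftPart (I : Fin D → ℕ) (R : Fin (D + 1) → ℕ)
    (G : ∀ d : Fin D, Fin (R d.castSucc) → Fin (I d) → Fin (R d.succ) → ℝ) (m : Fin (D + 1)) :
    ((k : {k : Fin D // k.castSucc < m}) → Fin (I k.1)) → Fin (R m) → ℝ :=
  Fin.induction
    (motive := fun m => ((k : {k : Fin D // k.castSucc < m}) → Fin (I k.1)) → Fin (R m) → ℝ)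
    (fun _ _ => 1)
    (fun k v j b => ∑ a, v (fun l => j ⟨l.1, l.2.trans k.castSucc_lt_succ⟩) a
      * G k a (j ⟨k, k.castSucc_lt_succ⟩) b) m

/-- The right interface matrix at the cut `m`: the contraction of all cores at sites from `m` on,
as a function of the physical indices at these sites and of the rank index at `m`. -/
noncomputable def rightPart (I : Fin D → ℕ) (R : Fin (D + 1) → ℕ)
    (G : ∀ d : Fin D, Fin (R d.castSucc) → Fin (I d) → Fin (R d.succ) → ℝ) (m : Fin (D + 1)) :
    ((k : {k : Fin D // m ≤ k.castSucc}) → Fin (I k.1)) → Fin (R m) → ℝ :=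
  Fin.reverseInduction
    (motive := fun m => ((k : {k : Fin D // m ≤ k.castSucc}) → Fin (I k.1)) → Fin (R m) → ℝ)
    (fun _ _ => 1)
    (fun k v j a => ∑ b, v (fun l => j ⟨l.1, k.castSucc_lt_succ.le.trans l.2⟩) b
      * G k a (j ⟨k, le_rfl⟩) b) m

lemma leftPart_zero (I : Fin D → ℕ) (R : Fin (D + 1) → ℕ)
    (G : ∀ d : Fin D, Fin (R d.castSucc) → Fin (I d) → Fin (R d.succ) → ℝ) :
    leftPart I R G 0 = fun _ _ => 1 := rfl

lemma leftPart_succ (I : Fin D → ℕ) (R : Fin (D + 1) → ℕ)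
    (G : ∀ d : Fin D, Fin (R d.castSucc) → Fin (I d) → Fin (R d.succ) → ℝ) (k : Fin D) :
    leftPart I R G k.succ = fun j b =>
      ∑ a, leftPart I R G k.castSucc (fun l => j ⟨l.1, l.2.trans k.castSucc_lt_succ⟩) a
      * G k a (j ⟨k, k.castSucc_lt_succ⟩) b := by
  simp [leftPart]

lemma rightPart_last (I : Fin D → ℕ) (R : Fin (D + 1) → ℕ)
    (G : ∀ d : Fin D, Fin (R d.castSucc) → Fin (I d) → Fin (R d.succ) → ℝ) :
    rightPart I R G (Fin.last D) = fun _ _ => 1 := by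
  simp [rightPart]

lemma rightPart_castSucc (I : Fin D → ℕ) (R : Fin (D + 1) → ℕ)
    (G : ∀ d : Fin D, Fin (R d.castSucc) → Fin (I d) → Fin (R d.succ) → ℝ) (k : Fin D) :
    rightPart I R G k.castSucc = fun j a =>
      ∑ b, rightPart I R G k.succ (fun l => j ⟨l.1, k.castSucc_lt_succ.le.trans l.2⟩) b
      * G k a (j ⟨k, le_rfl⟩) b := by
  simp [rightPart]

lemma rightPart_eq_tailSum (I : Fin D → ℕ) (R : Fin (D + 1) → ℕ)
    (G : ∀ d : Fin D, Fin (R d.castSucc) → Fin (I d) → Fin (R d.succ) → ℝ)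
    (i : ∀ d, Fin (I d)) (m : Fin (D + 1)) :
    rightPart I R G m (fun l => i l.1) = tailSum R (fun d a b => G d a (i d) b) m := by
  induction m using Fin.reverseInduction with
  | last => rw [tailSum_last, rightPart_last]
  | cast k ih =>
    rw [tailSum_castSucc, rightPart_castSucc]
    simp only [ih, mul_comm]

/-- The tensor is recovered by contracting its left and right parts at any cut. -/
lemma tt_split (I : Fin D → ℕ) (R : Fin (D + 1) → ℕ)
    (G : ∀ d : Fin D, Fin (R d.castSucc) → Fin (I d) → Fin (R d.succ) → ℝ)
    (A : (∀ d, Fin (I d)) → ℝ) (hTT : IsTT I R G A) (i : ∀ d, Fin (I d)) (m : Fin (D + 1)) :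
    A i = ∑ a, leftPart I R G m (fun l => i l.1) a * rightPart I R G m (fun l => i l.1) a := by
  induction m using Fin.induction with
  | zero =>
    have h := sum_chain_eq_tailSum R (fun d a b => G d a (i d) b) (fun _ => 1)
    rw [hTT i, leftPart_zero, rightPart_eq_tailSum, ← h]
    simp
  | succ k ih =>
    rw [ih, leftPart_succ, rightPart_castSucc]
    simp only [Finset.mul_sum, Finset.sum_mul]
    rw [Finset.sum_comm]
    exact Finset.sum_congr rfl fun _ _ => Finset.sum_congr rfl fun _ _ => by ring

/-! ### Orthonormality of the interface matrices -/

/-- Contracting an interface matrix with orthonormal columns with an orthogonal core gives again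
an interface matrix with orthonormal columns. -/
lemma orthonormal_step {J X α β : Type*} [Fintype J] [Fintype X] [Fintype α]
    [DecidableEq α] [DecidableEq β] (L : J → α → ℝ) (G : α → X → β → ℝ)
    (hL : ∀ a a', ∑ j, L j a * L j a' = if a = a' then 1 else 0)
    (hG : ∀ b b', ∑ x, ∑ a, G a x b * G a x b' = if b = b' then 1 else 0) (b b' : β) :
    ∑ q : J × X, (∑ a, L q.1 a * G a q.2 b) * (∑ a, L q.1 a * G a q.2 b')
      = if b = b' then 1 else 0 := by
  rw [← hG b b', Fintype.sum_prod_type_right]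
  refine Finset.sum_congr rfl fun x _ => ?_
  calc ∑ j, (∑ a, L j a * G a x b) * (∑ a, L j a * G a x b')
      = ∑ a, ∑ a', (∑ j, L j a * L j a') * (G a x b * G a' x b') := by
        simp only [Finset.sum_mul_sum]
        simp only [Finset.sum_mul]
        rw [Finset.sum_comm]
        refine Finset.sum_congr rfl fun a _ => ?_
        rw [Finset.sum_comm]
        exact Finset.sum_congr rfl fun _ _ => Finset.sum_congr rfl fun _ _ => by ring
    _ = ∑ a, G a x b * G a x b' := by simp [hL]

/-- Splitting off the last physical index of the left part. -/
def leftSplit (I : Fin D → ℕ) (m : Fin D) :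
    ((k : {k : Fin D // k.castSucc < m.succ}) → Fin (I k.1)) ≃
      ((k : {k : Fin D // k.castSucc < m.castSucc}) → Fin (I k.1)) × Fin (I m) where
  toFun j := (fun l => j ⟨l.1, l.2.trans m.castSucc_lt_succ⟩, j ⟨m, m.castSucc_lt_succ⟩)
  invFun q k := if h : k.1.castSucc < m.castSucc then q.1 ⟨k.1, h⟩ else
    Fin.cast (congrArg I (le_antisymm (Fin.castSucc_le_castSucc_iff.mp (not_lt.mp h))
      (Fin.castSucc_lt_succ_iff.mp k.2))) q.2
  left_inv j := by
    funext ⟨k, hk⟩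
    by_cases h : k.castSucc < m.castSucc
    · simp [h]
    · obtain rfl : m = k := le_antisymm (Fin.castSucc_le_castSucc_iff.mp (not_lt.mp h))
        (Fin.castSucc_lt_succ_iff.mp hk)
      simp
  right_inv q := by
    refine Prod.ext ?_ ?_
    · funext ⟨k, hk⟩
      simp [hk]
    · simp

/-- Splitting off the first physical index of the right part. -/
def rightSplit (I : Fin D → ℕ) (m : Fin D) :
    ((k : {k : Fin D // m.castSucc ≤ k.castSucc}) → Fin (I k.1)) ≃
      ((k : {k : Fin D // m.succ ≤ k.castSucc}) → Fin (I k.1)) × Fin (I m) where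
  toFun j := (fun l => j ⟨l.1, m.castSucc_lt_succ.le.trans l.2⟩, j ⟨m, le_rfl⟩)
  invFun q k := if h : m.succ ≤ k.1.castSucc then q.1 ⟨k.1, h⟩ else
    Fin.cast (congrArg I (le_antisymm (Fin.castSucc_le_castSucc_iff.mp k.2)
      (Fin.castSucc_lt_succ_iff.mp (not_le.mp h)))) q.2
  left_inv j := by
    funext ⟨k, hk⟩
    by_cases h : m.succ ≤ k.castSucc
    · simp [h]
    · obtain rfl : m = k := le_antisymm (Fin.castSucc_le_castSucc_iff.mp hk)
        (Fin.castSucc_lt_succ_iff.mp (not_le.mp h))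
      simp [h]
  right_inv q := by
    refine Prod.ext ?_ ?_
    · funext ⟨k, hk⟩
      simp [hk]
    · have h : ¬ m.succ ≤ m.castSucc := not_le.mpr m.castSucc_lt_succ
      simp [h]

lemma leftPart_orthonormal (I : Fin D → ℕ) (R : Fin (D + 1) → ℕ) (hR0 : R 0 = 1)
    (G : ∀ d : Fin D, Fin (R d.castSucc) → Fin (I d) → Fin (R d.succ) → ℝ) (m : Fin (D + 1))
    (h : ∀ k : Fin D, k.castSucc < m → LeftOrtho I R G k) (a a' : Fin (R m)) :
    ∑ j, leftPart I R G m j a * leftPart I R G m j a' = if a = a' then 1 else 0 := by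
  induction m using Fin.induction with
  | zero =>
    have : Subsingleton (Fin (R 0)) := by rw [hR0]; infer_instance
    have : IsEmpty {k : Fin D // k.castSucc < 0} := ⟨fun k => Fin.not_lt_zero _ k.2⟩
    rw [if_pos (Subsingleton.elim a a'), leftPart_zero]
    simp
  | succ k ih =>
    have hk := h k k.castSucc_lt_succ
    rw [leftPart_succ, ← orthonormal_step (leftPart I R G k.castSucc) (G k)
      (ih fun l hl => h l (hl.trans k.castSucc_lt_succ)) ?_ a a']
    · exact (leftSplit I k).sum_comp (fun q =>
        (∑ c, leftPart I R G k.castSucc q.1 c * G k c q.2 a) *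
          (∑ c, leftPart I R G k.castSucc q.1 c * G k c q.2 a'))
    · intro b b'
      have := congrFun (congrFun hk b) b'
      rw [Matrix.mul_apply, Matrix.one_apply, Fintype.sum_prod_type_right] at this
      exact this

lemma rightPart_orthonormal (I : Fin D → ℕ) (R : Fin (D + 1) → ℕ) (hRD : R (Fin.last D) = 1)
    (G : ∀ d : Fin D, Fin (R d.castSucc) → Fin (I d) → Fin (R d.succ) → ℝ) (m : Fin (D + 1))
    (h : ∀ k : Fin D, m ≤ k.castSucc → RightOrtho I R G k) (a a' : Fin (R m)) :
    ∑ j, rightPart I R G m j a * rightPart I R G m j a' = if a = a' then 1 else 0 := by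
  induction m using Fin.reverseInduction with
  | last =>
    have : Subsingleton (Fin (R (Fin.last D))) := by rw [hRD]; infer_instance
    have : IsEmpty {k : Fin D // Fin.last D ≤ k.castSucc} :=
      ⟨fun k => absurd k.2 (not_le.mpr (Fin.castSucc_lt_last _))⟩
    rw [if_pos (Subsingleton.elim a a'), rightPart_last]
    simp
  | cast k ih =>
    have hk := h k le_rfl
    rw [rightPart_castSucc, ← orthonormal_step (rightPart I R G k.succ)
      (fun b x a => G k a x b)
      (ih fun l hl => h l (k.castSucc_lt_succ.le.trans hl)) ?_ a a']
    · exact (rightSplit I k).sum_comp (fun q =>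
        (∑ c, rightPart I R G k.succ q.1 c * G k a q.2 c) *
          (∑ c, rightPart I R G k.succ q.1 c * G k a' q.2 c))
    · intro b b'
      have := congrFun (congrFun hk b) b'
      rw [Matrix.mul_apply, Matrix.one_apply, Fintype.sum_prod_type] at this
      exact this

/-! ### The rank identity -/

/-- The Kronecker product of the right and left interface matrices around site `d`. -/
noncomputable def interfaceMat (I : Fin D → ℕ) (R : Fin (D + 1) → ℕ)
    (G : ∀ d : Fin D, Fin (R d.castSucc) → Fin (I d) → Fin (R d.succ) → ℝ) (d : Fin D) :
    Matrix (Fin (R d.succ) × Fin (R d.castSucc))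
      (((k : {k : Fin D // d.succ ≤ k.castSucc}) → Fin (I k.1)) ×
        ((k : {k : Fin D // k.castSucc < d.castSucc}) → Fin (I k.1))) ℝ :=
  Matrix.of fun p j => rightPart I R G d.succ j.1 p.1 * leftPart I R G d.castSucc j.2 p.2

lemma pairedMatricization_eq_mul (I : Fin D → ℕ) (R : Fin (D + 1) → ℕ)
    (G : ∀ d : Fin D, Fin (R d.castSucc) → Fin (I d) → Fin (R d.succ) → ℝ)
    (A : (∀ d, Fin (I d)) → ℝ) (hTT : IsTT I R G A) (d : Fin D) :
    pairedMatricization I A d = coreMat I R G d * interfaceMat I R G d := by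
  ext x j
  rw [Matrix.mul_apply, Fintype.sum_prod_type_right]
  simp only [pairedMatricization, Matrix.of_apply, coreMat, interfaceMat]
  rw [tt_split I R G A hTT _ d.castSucc, rightPart_castSucc]
  have hd : ¬ d.succ ≤ d.castSucc := not_le.mpr d.castSucc_lt_succ
  refine Finset.sum_congr rfl fun a _ => ?_
  rw [Finset.mul_sum]
  refine Finset.sum_congr rfl fun b _ => ?_
  -- The glued multi-index restricts to `j.2` before site `d` and to `j.1` after it.
  have hl : (fun l : {k : Fin D // k.castSucc < d.castSucc} =>
      if h : l.1.castSucc < d.castSucc then j.2 ⟨l.1, h⟩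
      else if h' : d.succ ≤ l.1.castSucc then j.1 ⟨l.1, h'⟩
      else Fin.cast (congrArg I (le_antisymm (Fin.castSucc_le_castSucc_iff.mp (not_lt.mp h))
        (Fin.castSucc_lt_succ_iff.mp (not_le.mp h')))) x) = j.2 := by
    funext l
    rw [dif_pos l.2]
  have hr : (fun l : {k : Fin D // d.succ ≤ k.castSucc} =>
      if h : l.1.castSucc < d.castSucc then j.2 ⟨l.1, h⟩
      else if h' : d.succ ≤ l.1.castSucc then j.1 ⟨l.1, h'⟩
      else Fin.cast (congrArg I (le_antisymm (Fin.castSucc_le_castSucc_iff.mp (not_lt.mp h))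
        (Fin.castSucc_lt_succ_iff.mp (not_le.mp h')))) x) = j.1 := by
    funext l
    rw [dif_neg (not_lt.mpr (d.castSucc_lt_succ.le.trans l.2)), dif_pos l.2]
  rw [hl, hr]
  beta_reduce
  rw [dif_neg (lt_irrefl _), dif_neg hd, Fin.cast_eq_self]
  ring

lemma interfaceMat_mul_transpose (I : Fin D → ℕ) (R : Fin (D + 1) → ℕ)
    (hR0 : R 0 = 1) (hRD : R (Fin.last D) = 1)
    (G : ∀ d : Fin D, Fin (R d.castSucc) → Fin (I d) → Fin (R d.succ) → ℝ)
    (d : Fin D) (hmc : MixedCanonical I R G d) :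
    interfaceMat I R G d * (interfaceMat I R G d)ᵀ = 1 := by
  ext p q
  have hl := leftPart_orthonormal I R hR0 G d.castSucc
    (fun k hk => hmc.1 k (Fin.castSucc_lt_castSucc_iff.mp hk)) p.2 q.2
  have hr := rightPart_orthonormal I R hRD G d.succ
    (fun k hk => hmc.2 k (Fin.succ_le_castSucc_iff.mp hk)) p.1 q.1
  calc _ = (∑ j, rightPart I R G d.succ j p.1 * rightPart I R G d.succ j q.1) *
        ∑ j, leftPart I R G d.castSucc j p.2 * leftPart I R G d.castSucc j q.2 := by
        rw [Matrix.mul_apply, Fintype.sum_prod_type, Finset.sum_mul_sum]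
        exact Finset.sum_congr rfl fun _ _ => Finset.sum_congr rfl fun _ _ => by
          simp only [interfaceMat, Matrix.of_apply, Matrix.transpose_apply]
          ring
    _ = _ := by
        rw [hl, hr, Matrix.one_apply]
        simp only [Prod.ext_iff, ite_and, ite_mul, one_mul, zero_mul]

/-- **Corollary 3.2.** For a tensor `A` with multilinear rank `(S₁,…,S_D)`
in site-`d`-mixed-canonical TT form,
`S_d = rank A_{<d>} = rank A_d ≤ min (I_d) (R_d R_{d+1}) ≤ I_d`. -/
theorem multilinear_rank_eq_core_rank (I : Fin D → ℕ) (R : Fin (D + 1) → ℕ)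
    (hR0 : R 0 = 1) (hRD : R (Fin.last D) = 1)
    (G : ∀ d : Fin D, Fin (R d.castSucc) → Fin (I d) → Fin (R d.succ) → ℝ)
    (A : (∀ d, Fin (I d)) → ℝ) (hTT : IsTT I R G A)
    (S : Fin D → ℕ) (hS : ∀ k : Fin D, S k = (pairedMatricization I A k).rank)
    (d : Fin D) (hmc : MixedCanonical I R G d) :
    S d = (pairedMatricization I A d).rank ∧
    (pairedMatricization I A d).rank = (coreMat I R G d).rank ∧
    (coreMat I R G d).rank ≤ min (I d) (R d.castSucc * R d.succ) ∧
    min (I d) (R d.castSucc * R d.succ) ≤ I d := by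
  have hfac := pairedMatricization_eq_mul I R G A hTT d
  refine ⟨hS d, le_antisymm ?_ ?_, le_min ?_ ?_, min_le_left _ _⟩
  · rw [hfac]
    exact Matrix.rank_mul_le_left _ _
  · have h : coreMat I R G d = pairedMatricization I A d * (interfaceMat I R G d)ᵀ := by
      rw [hfac, Matrix.mul_assoc, interfaceMat_mul_transpose I R hR0 hRD G d hmc, Matrix.mul_one]
    calc (coreMat I R G d).rank
        = (pairedMatricization I A d * (interfaceMat I R G d)ᵀ).rank := congrArg _ h
      _ ≤ _ := Matrix.rank_mul_le_left _ _
  · simpa using (coreMat I R G d).rank_le_card_height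
  · simpa [mul_comm] using (coreMat I R G d).rank_le_card_width
end

section
/- Let the D-way tensor A be given by a tensor train decomposition in site-d-mixed-canonical form, and let A_d = U_d S V^T be a compact singular value decomposition of A_d (U_d and V have orthonormal columns, S is diagonal with strictly positive entries). Then A_{<d>} = U_d S (V^T (A_{>d} ⊗ A_{<d})) is a compact singular value decomposition of the mode-d matricization A_{<d>}; in particular the matrix (A_{>d}^T ⊗ A_{<d}^T) V has orthonormal columns and the nonzero singular values of A_{<d>} coincide with those of A_d. -/
/-!
Contracting the train at site `d` gives `A_{<d>} = A_d (A_{>d} ⊗ A_{<d})`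
(`pairedMatricization_eq`): a rank-index family splits uniquely into its parts up to `d` and
after `d`, and the product of cores splits accordingly. Substituting `A_d = U S Vᵀ` yields the
factorization.

For orthonormality, `A_{<d} A_{<d}ᵀ = 1` and `A_{>d} A_{>d}ᵀ = 1` are proved by induction along
the train (`leftMat_mul_transpose`, `rightMat_mul_transpose`): adding one core replaces the Gram
matrix by the Gram matrix of that core (`sum_contract`), which is the identity by its
orthogonality; the boundary ranks being `1` starts both inductions. Hence the Kronecker product
`A_{>d} ⊗ A_{<d}` also has orthonormal rows, and
`Vᵀ (A_{>d} ⊗ A_{<d}) (A_{>d} ⊗ A_{<d})ᵀ V = Vᵀ V = 1`.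
-/

open scoped Matrix Kronecker

variable {D : ℕ}

def leftMat (I : Fin D → ℕ) (R : Fin (D + 1) → ℕ)
    (G : ∀ d : Fin D, Fin (R d.castSucc) → Fin (I d) → Fin (R d.succ) → ℝ)
    (d : Fin (D + 1)) :
    Matrix (Fin (R d)) ((k : {k : Fin D // k.castSucc < d}) → Fin (I k.1)) ℝ :=
  Matrix.of fun r i =>
    ∑ ρ : (k : {k : Fin (D + 1) // k ≤ d}) → Fin (R k.1),
      (if ρ ⟨d, le_rfl⟩ = r then (1 : ℝ) else 0) *
        ∏ k : {k : Fin D // k.castSucc < d},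
          G k.1 (ρ ⟨k.1.castSucc, k.2.le⟩) (i k)
            (ρ ⟨k.1.succ, Fin.castSucc_lt_iff_succ_le.mp k.2⟩)

def rightMat (I : Fin D → ℕ) (R : Fin (D + 1) → ℕ)
    (G : ∀ d : Fin D, Fin (R d.castSucc) → Fin (I d) → Fin (R d.succ) → ℝ)
    (d : Fin (D + 1)) :
    Matrix (Fin (R d)) ((k : {k : Fin D // d ≤ k.castSucc}) → Fin (I k.1)) ℝ :=
  Matrix.of fun r i =>
    ∑ ρ : (k : {k : Fin (D + 1) // d ≤ k}) → Fin (R k.1),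
      (if ρ ⟨d, le_rfl⟩ = r then (1 : ℝ) else 0) *
        ∏ k : {k : Fin D // d ≤ k.castSucc},
          G k.1 (ρ ⟨k.1.castSucc, k.2⟩) (i k)
            (ρ ⟨k.1.succ, k.2.trans (Fin.castSucc_le_succ k.1)⟩)

/-! ### Splitting dependent functions and products over subtypes -/

theorem bijective_restrict_insert {ι : Type*} {β : ι → Type*} {p q : ι → Prop} (a : ι)
    (hqa : q a) (hpq : ∀ j, p j → q j) (hcover : ∀ j, q j → j = a ∨ p j) (hpa : ¬ p a) :
    Function.Bijective (fun f : (∀ j : {j // q j}, β j.1) =>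
      ((f ⟨a, hqa⟩, fun j => f ⟨j.1, hpq j.1 j.2⟩) : β a × (∀ j : {j // p j}, β j.1))) := by
  classical
  constructor
  · intro f g hfg
    obtain ⟨h1, h2⟩ := Prod.mk.inj hfg
    funext ⟨j, hj⟩
    rcases hcover j hj with rfl | hp
    · exact h1
    · exact congrFun h2 ⟨j, hp⟩
  · rintro ⟨x, g⟩
    refine ⟨fun j => if h : p j.1 then g ⟨j.1, h⟩ else
      ((hcover j.1 j.2).resolve_right h).symm ▸ x, ?_⟩
    ext1
    · simp [hpa]
    · funext j
      simp [j.2]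

theorem bijective_restrict_split {ι : Type*} {β : ι → Type*} {p q : ι → Prop}
    (hcover : ∀ j, p j ∨ q j) (hdisj : ∀ j, p j → ¬ q j) :
    Function.Bijective (fun f : (∀ j, β j) =>
      ((fun j => f j.1, fun j => f j.1) :
        (∀ j : {j // p j}, β j.1) × (∀ j : {j // q j}, β j.1))) := by
  classical
  constructor
  · intro f g hfg
    obtain ⟨h1, h2⟩ := Prod.mk.inj hfg
    funext j
    rcases hcover j with hp | hq
    · exact congrFun h1 ⟨j, hp⟩
    · exact congrFun h2 ⟨j, hq⟩
  · rintro ⟨g, g'⟩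
    refine ⟨fun j => if h : p j then g ⟨j, h⟩ else
      g' ⟨j, (hcover j).resolve_left h⟩, ?_⟩
    ext1
    · funext j
      simp [j.2]
    · funext j
      have : ¬ p j.1 := fun h => hdisj _ h j.2
      simp [this]

theorem prod_subtype_insert {ι : Type*} [Fintype ι] {p q : ι → Prop}
    [DecidablePred p] [DecidablePred q] (a : ι)
    (hqa : q a) (hpq : ∀ j, p j → q j) (hcover : ∀ j, q j → j = a ∨ p j) (hpa : ¬ p a)
    (f : {j // q j} → ℝ) :
    ∏ j, f j = f ⟨a, hqa⟩ * ∏ j : {j // p j}, f ⟨j.1, hpq j.1 j.2⟩ := by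
  classical
  rw [Fintype.prod_eq_mul_prod_compl ⟨a, hqa⟩]
  congr 1
  symm
  refine Finset.prod_bij (fun j _ => ⟨j.1, hpq j.1 j.2⟩) ?_ ?_ ?_ ?_
  · rintro ⟨j, hj⟩ -
    simp only [Finset.mem_compl, Finset.mem_singleton, Subtype.mk.injEq]
    rintro rfl
    exact hpa hj
  · rintro ⟨j, hj⟩ - ⟨k, hk⟩ - h
    simpa using h
  · rintro ⟨j, hj⟩ h
    simp only [Finset.mem_compl, Finset.mem_singleton, Subtype.mk.injEq] at h
    exact ⟨⟨j, (hcover j hj).resolve_left h⟩, Finset.mem_univ _, rfl⟩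
  · intros
    rfl

/-- A product over all sites factors into the sites before `d`, site `d`, and those after. -/
theorem prod_fin_split (d : Fin D) (f : Fin D → ℝ) :
    ∏ k, f k = (∏ k : {k : Fin D // k.castSucc < d.castSucc}, f k.1) * f d *
      ∏ k : {k : Fin D // d.succ ≤ k.castSucc}, f k.1 := by
  rw [← Fintype.prod_subtype_mul_prod_subtype (fun k : Fin D => k.castSucc < d.castSucc) f,
    prod_subtype_insert (p := fun k : Fin D => d.succ ≤ k.castSucc)
      (q := fun k : Fin D => ¬ k.castSucc < d.castSucc) d (by simp)
      (fun j hj => ?_) (fun j hj => ?_) (by simp) (fun k => f k.1), mul_assoc]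
  · simp only [Fin.le_def, Fin.lt_def, Fin.val_succ, Fin.val_castSucc] at *
    omega
  · simp only [Fin.le_def, Fin.lt_def, Fin.ext_iff, Fin.val_succ, Fin.val_castSucc] at *
    omega

/-! ### Recursions for the interface matrices -/

theorem leftMat_succ (I : Fin D → ℕ) (R : Fin (D + 1) → ℕ)
    (G : ∀ d : Fin D, Fin (R d.castSucc) → Fin (I d) → Fin (R d.succ) → ℝ)
    (k : Fin D) (s : Fin (R k.succ))
    (i : (j : {j : Fin D // j.castSucc < k.succ}) → Fin (I j.1)) :
    leftMat I R G k.succ s i =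
      ∑ r, leftMat I R G k.castSucc r
          (fun j => i ⟨j.1, j.2.trans Fin.castSucc_lt_succ⟩) *
        G k r (i ⟨k, Fin.castSucc_lt_succ⟩) s := by
  have hpq : ∀ j : Fin (D + 1), j ≤ k.castSucc → j ≤ k.succ :=
    fun j hj => hj.trans (Fin.castSucc_le_succ k)
  have hcov : ∀ j : Fin (D + 1), j ≤ k.succ → j = k.succ ∨ j ≤ k.castSucc := by
    intro j hj
    simp only [Fin.le_def, Fin.ext_iff, Fin.val_succ, Fin.val_castSucc] at *
    omega
  have hbij := bijective_restrict_insert (β := fun j => Fin (R j))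
    (p := fun j : Fin (D + 1) => j ≤ k.castSucc) (q := fun j => j ≤ k.succ) k.succ le_rfl
    hpq hcov (by simp [Fin.le_def])
  have hprod := fun f => prod_subtype_insert
    (p := fun j : Fin D => j.castSucc < k.castSucc) (q := fun j => j.castSucc < k.succ) k
    Fin.castSucc_lt_succ (fun j hj => hj.trans Fin.castSucc_lt_succ)
    (by
      intro j hj
      simp only [Fin.lt_def, Fin.ext_iff, Fin.val_succ, Fin.val_castSucc] at *
      omega) (by simp) f
  simp only [leftMat, Matrix.of_apply, hprod]
  refine (hbij.sum_comp (fun x : Fin (R k.succ) ×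
      ((j : {j : Fin (D + 1) // j ≤ k.castSucc}) → Fin (R j.1)) =>
    (if x.1 = s then (1 : ℝ) else 0) *
      (G k (x.2 ⟨k.castSucc, le_rfl⟩) (i ⟨k, Fin.castSucc_lt_succ⟩) x.1 *
        ∏ j : {j : Fin D // j.castSucc < k.castSucc},
          G j.1 (x.2 ⟨j.1.castSucc, j.2.le⟩) (i ⟨j.1, j.2.trans Fin.castSucc_lt_succ⟩)
            (x.2 ⟨j.1.succ, Fin.castSucc_lt_iff_succ_le.mp j.2⟩)))).trans ?_
  rw [Fintype.sum_prod_type_right]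
  simp only [Finset.sum_mul]
  refine Eq.trans ?_ Finset.sum_comm
  refine Finset.sum_congr rfl fun ρ _ => ?_
  simp [ite_mul, mul_comm]

theorem rightMat_castSucc (I : Fin D → ℕ) (R : Fin (D + 1) → ℕ)
    (G : ∀ d : Fin D, Fin (R d.castSucc) → Fin (I d) → Fin (R d.succ) → ℝ)
    (k : Fin D) (r : Fin (R k.castSucc))
    (i : (j : {j : Fin D // k.castSucc ≤ j.castSucc}) → Fin (I j.1)) :
    rightMat I R G k.castSucc r i =
      ∑ s, rightMat I R G k.succ s
          (fun j => i ⟨j.1, (Fin.castSucc_le_succ k).trans j.2⟩) *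
        G k r (i ⟨k, le_rfl⟩) s := by
  have hcov : ∀ j : Fin (D + 1), k.castSucc ≤ j → j = k.castSucc ∨ k.succ ≤ j := by
    intro j hj
    simp only [Fin.le_def, Fin.ext_iff, Fin.val_succ, Fin.val_castSucc] at *
    omega
  have hbij := bijective_restrict_insert (β := fun j => Fin (R j))
    (p := fun j : Fin (D + 1) => k.succ ≤ j) (q := fun j => k.castSucc ≤ j) k.castSucc le_rfl
    (fun j hj => (Fin.castSucc_le_succ k).trans hj) hcov (by simp [Fin.le_def])
  have hprod := fun f => prod_subtype_insert
    (p := fun j : Fin D => k.succ ≤ j.castSucc) (q := fun j => k.castSucc ≤ j.castSucc) k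
    le_rfl (fun j hj => (Fin.castSucc_le_succ k).trans hj)
    (by
      intro j hj
      simp only [Fin.le_def, Fin.ext_iff, Fin.val_succ, Fin.val_castSucc] at *
      omega) (by simp) f
  simp only [rightMat, Matrix.of_apply, hprod]
  refine (hbij.sum_comp (fun x : Fin (R k.castSucc) ×
      ((j : {j : Fin (D + 1) // k.succ ≤ j}) → Fin (R j.1)) =>
    (if x.1 = r then (1 : ℝ) else 0) *
      (G k x.1 (i ⟨k, le_rfl⟩) (x.2 ⟨k.succ, le_rfl⟩) *
        ∏ j : {j : Fin D // k.succ ≤ j.castSucc},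
          G j.1 (x.2 ⟨j.1.castSucc, j.2⟩)
            (i ⟨j.1, (Fin.castSucc_le_succ k).trans j.2⟩)
            (x.2 ⟨j.1.succ, j.2.trans (Fin.castSucc_le_succ j.1)⟩)))).trans ?_
  rw [Fintype.sum_prod_type_right]
  simp only [Finset.sum_mul]
  refine Eq.trans ?_ Finset.sum_comm
  refine Finset.sum_congr rfl fun ρ _ => ?_
  simp [ite_mul, mul_comm]

/-! ### Orthonormality of the interface matrices -/

/-- The inductive step for the Gram matrices of both interface matrices: if `L` has orthonormal
rows, then contracting `L` with a core `H` leaves the Gram matrix of `H`. The bijection `e`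
separates the index of the core's site from the indices of the other sites. -/
theorem sum_contract {α β γ ι κ : Type*} [Fintype α] [Fintype β] [Fintype γ] [Fintype ι]
    [DecidableEq ι] (e : γ → α × β) (he : Function.Bijective e)
    (L : Matrix ι β ℝ) (hL : L * Lᵀ = 1) (H : ι → α → κ → ℝ) (s t : κ) :
    ∑ c, (∑ r, L r (e c).2 * H r (e c).1 s) * (∑ r, L r (e c).2 * H r (e c).1 t) =
      ∑ r, ∑ a, H r a s * H r a t := by
  have hL' : ∀ r r', ∑ b, L r b * L r' b = if r = r' then 1 else 0 := by
    intro r r'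
    have := congrFun (congrFun hL r) r'
    simpa [Matrix.mul_apply, Matrix.one_apply] using this
  rw [he.sum_comp (fun x : α × β =>
    (∑ r, L r x.2 * H r x.1 s) * (∑ r, L r x.2 * H r x.1 t)), Fintype.sum_prod_type]
  refine Eq.trans ?_ Finset.sum_comm
  refine Finset.sum_congr rfl fun a _ => ?_
  calc ∑ b, (∑ r, L r b * H r a s) * (∑ r, L r b * H r a t)
      = ∑ b, ∑ r, ∑ r', (L r b * L r' b) * (H r a s * H r' a t) := by
        refine Finset.sum_congr rfl fun b _ => ?_
        rw [Finset.sum_mul_sum]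
        refine Finset.sum_congr rfl fun r _ => Finset.sum_congr rfl fun r' _ => ?_
        ring
    _ = ∑ r, ∑ r', (∑ b, L r b * L r' b) * (H r a s * H r' a t) := by
        rw [Finset.sum_comm]
        refine Finset.sum_congr rfl fun r _ => ?_
        rw [Finset.sum_comm]
        simp only [Finset.sum_mul]
    _ = ∑ r, H r a s * H r a t := by
        simp [hL', ite_mul]

theorem leftMat_mul_transpose (I : Fin D → ℕ) (R : Fin (D + 1) → ℕ) (hR0 : R 0 = 1)
    (G : ∀ d : Fin D, Fin (R d.castSucc) → Fin (I d) → Fin (R d.succ) → ℝ)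
    (d : Fin (D + 1)) (h : ∀ k : Fin D, k.castSucc < d → LeftOrtho I R G k) :
    leftMat I R G d * (leftMat I R G d)ᵀ = 1 := by
  induction d using Fin.induction with
  | zero =>
    have : Subsingleton (Fin (R 0)) := by rw [hR0]; infer_instance
    have hE : IsEmpty {k : Fin D // k.castSucc < 0} := ⟨fun k => by simpa using k.2⟩
    let _ : Unique {k : Fin (D + 1) // k ≤ 0} :=
      ⟨⟨⟨0, le_rfl⟩⟩, fun k => Subtype.ext (Fin.le_zero_iff.mp k.2)⟩
    ext r s
    obtain rfl := Subsingleton.elim r s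
    have hs : ∀ ρ : (k : {k : Fin (D + 1) // k ≤ 0}) → Fin (R k.1),
        ρ ⟨0, le_rfl⟩ = r := fun ρ => Subsingleton.elim _ _
    have hc : Fintype.card ((k : {k : Fin (D + 1) // k ≤ 0}) → Fin (R k.1)) = 1 := by
      rw [Fintype.card_pi, Fintype.prod_unique]
      simp only [Fintype.card_fin]
      exact hR0
    simp [Matrix.mul_apply, leftMat, hs, -Fintype.card_pi, hc]
  | succ k ih =>
    have hL := ih fun j hj => h j (hj.trans Fin.castSucc_lt_succ)
    have hG := h k Fin.castSucc_lt_succ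
    have hbij := bijective_restrict_insert (β := fun j => Fin (I j))
      (p := fun j : Fin D => j.castSucc < k.castSucc) (q := fun j => j.castSucc < k.succ) k
      Fin.castSucc_lt_succ (fun j hj => hj.trans Fin.castSucc_lt_succ)
      (by
        intro j hj
        simp only [Fin.lt_def, Fin.ext_iff, Fin.val_succ, Fin.val_castSucc] at *
        omega) (by simp)
    ext s t
    have hst := congrFun (congrFun hG s) t
    simp only [Matrix.mul_apply, Matrix.transpose_apply, Matrix.of_apply,
      Fintype.sum_prod_type] at hst
    rw [Matrix.mul_apply, ← hst]
    simp only [Matrix.transpose_apply, leftMat_succ]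
    exact sum_contract _ hbij _ hL (fun r a s => G k r a s) s t

theorem rightMat_mul_transpose (I : Fin D → ℕ) (R : Fin (D + 1) → ℕ)
    (hRD : R (Fin.last D) = 1)
    (G : ∀ d : Fin D, Fin (R d.castSucc) → Fin (I d) → Fin (R d.succ) → ℝ)
    (d : Fin (D + 1)) (h : ∀ k : Fin D, d ≤ k.castSucc → RightOrtho I R G k) :
    rightMat I R G d * (rightMat I R G d)ᵀ = 1 := by
  induction d using Fin.reverseInduction with
  | last =>
    have : Subsingleton (Fin (R (Fin.last D))) := by rw [hRD]; infer_instance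
    have hE : IsEmpty {k : Fin D // Fin.last D ≤ k.castSucc} :=
      ⟨fun k => absurd k.2 (not_le.mpr (Fin.castSucc_lt_last k.1))⟩
    let _ : Unique {k : Fin (D + 1) // Fin.last D ≤ k} :=
      ⟨⟨⟨Fin.last D, le_rfl⟩⟩, fun k => Subtype.ext (Fin.last_le_iff.mp k.2)⟩
    ext r s
    obtain rfl := Subsingleton.elim r s
    have hs : ∀ ρ : (k : {k : Fin (D + 1) // Fin.last D ≤ k}) → Fin (R k.1),
        ρ ⟨Fin.last D, le_rfl⟩ = r := fun ρ => Subsingleton.elim _ _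
    have hc : Fintype.card ((k : {k : Fin (D + 1) // Fin.last D ≤ k}) → Fin (R k.1)) = 1 := by
      rw [Fintype.card_pi, Fintype.prod_unique]
      simp only [Fintype.card_fin]
      exact hRD
    simp [Matrix.mul_apply, rightMat, hs, -Fintype.card_pi, hc]
  | cast k ih =>
    have hL := ih fun j hj => h j ((Fin.castSucc_le_succ k).trans hj)
    have hG := h k le_rfl
    have hbij := bijective_restrict_insert (β := fun j => Fin (I j))
      (p := fun j : Fin D => k.succ ≤ j.castSucc) (q := fun j => k.castSucc ≤ j.castSucc) k
      le_rfl (fun j hj => (Fin.castSucc_le_succ k).trans hj)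
      (by
        intro j hj
        simp only [Fin.le_def, Fin.ext_iff, Fin.val_succ, Fin.val_castSucc] at *
        omega) (by simp)
    ext s t
    have hst := congrFun (congrFun hG s) t
    simp only [Matrix.mul_apply, Matrix.transpose_apply, Matrix.of_apply,
      Fintype.sum_prod_type_right] at hst
    rw [Matrix.mul_apply, ← hst]
    simp only [Matrix.transpose_apply, rightMat_castSucc]
    exact sum_contract _ hbij _ hL (fun r a s => G k s a r) s t

/-! ### Factorization of the matricization -/

/-- The mode-`d` matricization is the core at site `d` contracted with the interface matrices on
either side; this needs no orthogonality. -/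
theorem pairedMatricization_eq (I : Fin D → ℕ) (R : Fin (D + 1) → ℕ)
    (G : ∀ d : Fin D, Fin (R d.castSucc) → Fin (I d) → Fin (R d.succ) → ℝ)
    (A : (∀ d, Fin (I d)) → ℝ) (hTT : IsTT I R G A) (d : Fin D) :
    pairedMatricization I A d =
      coreMat I R G d * (rightMat I R G d.succ ⊗ₖ leftMat I R G d.castSucc) := by
  ext i ⟨jr, jl⟩
  have hbij := bijective_restrict_split (β := fun j => Fin (R j))
    (p := fun j : Fin (D + 1) => j ≤ d.castSucc) (q := fun j => d.succ ≤ j)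
    (by
      intro j
      simp only [Fin.le_def, Fin.val_succ, Fin.val_castSucc]
      omega)
    (by
      intro j
      simp only [Fin.le_def, Fin.val_succ, Fin.val_castSucc]
      omega)
  simp only [pairedMatricization, Matrix.of_apply]
  rw [hTT]
  simp only [prod_fin_split d]
  -- The index family takes the values `jl`, `i`, `jr` before, at and after site `d`.
  have hl : ∀ k : {k : Fin D // k.castSucc < d.castSucc}, k.1.castSucc < d.castSucc :=
    fun k => k.2
  have hr : ∀ k : {k : Fin D // d.succ ≤ k.castSucc}, ¬ k.1.castSucc < d.castSucc := by
    intro k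
    have := k.2
    simp only [Fin.le_def, Fin.lt_def, Fin.val_succ, Fin.val_castSucc] at *
    omega
  have hr' : ∀ k : {k : Fin D // d.succ ≤ k.castSucc}, d.succ ≤ k.1.castSucc := fun k => k.2
  have hd : ¬ d.succ ≤ d.castSucc := by simp
  simp only [hl, hr, hr', hd, lt_irrefl, dite_true, dite_false, Fin.cast_eq_self]
  refine (hbij.sum_comp (fun x : ((j : {j : Fin (D + 1) // j ≤ d.castSucc}) → Fin (R j.1)) ×
      ((j : {j : Fin (D + 1) // d.succ ≤ j}) → Fin (R j.1)) =>
    (∏ k : {k : Fin D // k.castSucc < d.castSucc},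
      G k.1 (x.1 ⟨k.1.castSucc, k.2.le⟩) (jl k)
        (x.1 ⟨k.1.succ, Fin.castSucc_lt_iff_succ_le.mp k.2⟩)) *
    G d (x.1 ⟨d.castSucc, le_rfl⟩) i (x.2 ⟨d.succ, le_rfl⟩) *
    ∏ k : {k : Fin D // d.succ ≤ k.castSucc},
      G k.1 (x.2 ⟨k.1.castSucc, k.2⟩) (jr k)
        (x.2 ⟨k.1.succ, k.2.trans (Fin.castSucc_le_succ k.1)⟩))).trans ?_
  simp only [Matrix.mul_apply, Matrix.kroneckerMap_apply, coreMat, rightMat, leftMat,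
    Matrix.of_apply, Fintype.sum_prod_type]
  simp only [Finset.sum_mul_sum]
  simp only [Finset.mul_sum]
  symm
  calc _ = ∑ ρ' : (j : {j : Fin (D + 1) // d.succ ≤ j}) → Fin (R j.1),
        ∑ ρ : (j : {j : Fin (D + 1) // j ≤ d.castSucc}) → Fin (R j.1), ∑ s, ∑ r, _ := by
        rw [Finset.sum_congr rfl fun s _ => Finset.sum_comm, Finset.sum_comm]
        refine Finset.sum_congr rfl fun ρ' _ => ?_
        rw [Finset.sum_congr rfl fun s _ => Finset.sum_comm, Finset.sum_comm]
    _ = _ := by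
        rw [Finset.sum_comm]
        refine Finset.sum_congr rfl fun ρ _ => Finset.sum_congr rfl fun ρ' _ => ?_
        simp only [ite_mul, one_mul, zero_mul, mul_ite, mul_zero, Finset.sum_ite_eq,
          Finset.mem_univ, if_true]
        ring

/-- **Corollary 3.3.** For a tensor `A` in site-`d`-mixed-canonical TT form,
if `A_d = U_d S Vᵀ` is a compact SVD of `A_d` (`U_d`, `V` with orthonormal columns, `S`
diagonal with strictly positive diagonal), then
`A_{<d>} = U_d S (Vᵀ (A_{>d} ⊗ A_{<d}))` is a compact SVD of the mode-`d` matricization: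
the factorization holds and the matrix `(A_{>d}ᵀ ⊗ A_{<d}ᵀ) V` has orthonormal columns
(so the nonzero singular values of `A_{<d>}` coincide with those of `A_d`, namely the
diagonal entries of `S`). -/
theorem compact_svd_of_matricization (I : Fin D → ℕ) (R : Fin (D + 1) → ℕ)
    (hR0 : R 0 = 1) (hRD : R (Fin.last D) = 1)
    (G : ∀ d : Fin D, Fin (R d.castSucc) → Fin (I d) → Fin (R d.succ) → ℝ)
    (A : (∀ d, Fin (I d)) → ℝ) (hTT : IsTT I R G A)
    (d : Fin D) (hmc : MixedCanonical I R G d)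
    (m : ℕ) (U : Matrix (Fin (I d)) (Fin m) ℝ) (S : Matrix (Fin m) (Fin m) ℝ)
    (V : Matrix (Fin (R d.succ) × Fin (R d.castSucc)) (Fin m) ℝ)
    (hU : Uᵀ * U = 1) (hV : Vᵀ * V = 1)
    (hSdiag : ∀ a b : Fin m, a ≠ b → S a b = 0) (hSpos : ∀ a : Fin m, 0 < S a a)
    (hsvd : coreMat I R G d = U * S * Vᵀ) :
    pairedMatricization I A d =
      U * S * (Vᵀ * (rightMat I R G d.succ ⊗ₖ leftMat I R G d.castSucc)) ∧
    (((rightMat I R G d.succ)ᵀ ⊗ₖ (leftMat I R G d.castSucc)ᵀ) * V)ᵀ *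
        (((rightMat I R G d.succ)ᵀ ⊗ₖ (leftMat I R G d.castSucc)ᵀ) * V) = 1 := by
  refine ⟨?_, ?_⟩
  · rw [pairedMatricization_eq I R G A hTT d, hsvd, Matrix.mul_assoc _ Vᵀ]
  · have hl := leftMat_mul_transpose I R hR0 G d.castSucc
      fun k hk => hmc.1 k (Fin.castSucc_lt_castSucc_iff.mp hk)
    have hr := rightMat_mul_transpose I R hRD G d.succ
      fun k hk => hmc.2 k (Fin.succ_le_castSucc_iff.mp hk)
    rw [Matrix.transpose_mul, Matrix.mul_assoc, ← Matrix.mul_assoc _ _ V,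
      ← Matrix.kroneckerMap_transpose, Matrix.transpose_transpose, Matrix.transpose_transpose,
      ← Matrix.mul_kronecker_mul, hr, hl, Matrix.one_kronecker_one, Matrix.one_mul, hV]
end

section
/- Let A ∈ ℝ^{I_1×⋯×I_D}. Define Â_0 = A and, for d = 1,…,D, let U_d ∈ ℝ^{I_d×S_d} be a matrix whose columns are leading left singular vectors (corresponding to the S_d largest singular values) of the mode-d matricization of Â_{d−1}, and set Â_d = Â_{d−1} ×_d (U_d U_d^T). Let σ_d(i) denote the i-th largest singular value of the mode-d matricization of Â_{d−1}. Then the sequentially truncated approximation Â = Â_D satisfies ‖A − Â‖_F² = Σ_{d=1}^{D} Σ_{i=S_d+1}^{I_d} σ_d(i)². -/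
/-!
Write `P_d = U_d U_dᵀ`. Each `P_d` is symmetric and idempotent, so `X ↦ X ×_d P_d` is an orthogonal
projection for the Frobenius inner product, and these projections commute for distinct modes
(`modeProdSq_comm`). Hence `Â_k` is fixed by the mode-`j` projections with `j < k`, and by
self-adjointness (`frobInner_modeProdSq`) `⟨A, Y⟩ = ⟨Â_k, Y⟩` for every tensor `Y` fixed by them.
Taking `Y = Â_k` gives the Pythagorean identity `‖A - Â_k‖² = ‖A‖² - ‖Â_k‖²`.

The difference `‖A‖² - ‖Â_D‖²` telescopes into the one-step losses
`‖Â_{d-1}‖² - ‖Â_d‖² = tr G - tr (P_d G)`, where `G` is the Gram matrix of the mode-`d`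
matricization. In the eigenbasis of `G` this is the tail sum of the `σ_d(i)²`.
-/

open scoped Matrix Kronecker

variable {D : ℕ}

/-- mode-`d` matricization of a tensor (columns indexed by the remaining indices). -/
def matricization (I : Fin D → ℕ) (A : (∀ d, Fin (I d)) → ℝ) (d : Fin D) :
    Matrix (Fin (I d)) ((k : {k : Fin D // k ≠ d}) → Fin (I k.1)) ℝ :=
  Matrix.of fun i j =>
    A fun k => if h : k = d then Fin.cast (congrArg I h.symm) i else j ⟨k, h⟩

/-- The `d`-mode product of a tensor with a square matrix `P ∈ ℝ^{I_d×I_d}`. -/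
def modeProdSq (I : Fin D → ℕ) (A : (∀ d, Fin (I d)) → ℝ) (d : Fin D)
    (P : Matrix (Fin (I d)) (Fin (I d)) ℝ) : (∀ d, Fin (I d)) → ℝ :=
  fun i => ∑ j : Fin (I d), P (i d) j * A (Function.update i d j)

/-- Squared Frobenius norm of a tensor. -/
def frobSq (I : Fin D → ℕ) (A : (∀ d, Fin (I d)) → ℝ) : ℝ :=
  ∑ i : ∀ d, Fin (I d), (A i) ^ 2

/-- The Frobenius inner product of two tensors. -/
def frobInner (I : Fin D → ℕ) (A B : (∀ d, Fin (I d)) → ℝ) : ℝ :=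
  ∑ i : ∀ d, Fin (I d), A i * B i

theorem frobSq_eq_frobInner (I : Fin D → ℕ) (A : (∀ d, Fin (I d)) → ℝ) :
    frobSq I A = frobInner I A A := by
  simp [frobSq, frobInner, sq]

theorem frobSq_sub (I : Fin D → ℕ) (A B : (∀ d, Fin (I d)) → ℝ) :
    frobSq I (fun i => A i - B i) = frobSq I A - 2 * frobInner I A B + frobSq I B := by
  simp only [frobSq, frobInner, Finset.mul_sum, ← Finset.sum_sub_distrib,
    ← Finset.sum_add_distrib]
  exact Finset.sum_congr rfl fun i _ => by ring

theorem frobInner_eq_trace (I : Fin D → ℕ) (A B : (∀ d, Fin (I d)) → ℝ) (d : Fin D) :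
    frobInner I A B = (matricization I A d * (matricization I B d)ᵀ).trace := by
  have key : ∀ (a : Fin (I d)) (r : (k : {k : Fin D // k ≠ d}) → Fin (I k.1)),
      (Equiv.piSplitAt d fun k => Fin (I k)).symm (a, r) =
        fun k => if h : k = d then Fin.cast (congrArg I h.symm) a else r ⟨k, h⟩ := by
    intro a r
    funext k
    by_cases h : k = d
    · subst h
      simp [Equiv.piSplitAt]
    · simp [Equiv.piSplitAt, h]
  simp only [Matrix.trace, Matrix.diag_apply, Matrix.mul_apply, Matrix.transpose_apply,
    matricization, Matrix.of_apply, frobInner]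
  rw [← (Equiv.piSplitAt d fun k => Fin (I k)).symm.sum_comp, Fintype.sum_prod_type]
  simp only [key]

theorem matricization_modeProdSq (I : Fin D → ℕ) (A : (∀ d, Fin (I d)) → ℝ) (d : Fin D)
    (P : Matrix (Fin (I d)) (Fin (I d)) ℝ) :
    matricization I (modeProdSq I A d P) d = P * matricization I A d := by
  ext a r
  simp only [matricization, modeProdSq, Matrix.of_apply, Matrix.mul_apply]
  refine Finset.sum_congr rfl fun j _ => ?_
  have hu : Function.update
      (fun k => if h : k = d then Fin.cast (congrArg I h.symm) a else r ⟨k, h⟩) d j =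
        fun k => if h : k = d then Fin.cast (congrArg I h.symm) j else r ⟨k, h⟩ := by
    funext k
    by_cases h : k = d
    · subst h
      simp
    · simp [h]
  rw [hu]
  simp

/-- A mode product with a symmetric matrix is self-adjoint. -/
theorem frobInner_modeProdSq (I : Fin D → ℕ) (A B : (∀ d, Fin (I d)) → ℝ) (d : Fin D)
    (P : Matrix (Fin (I d)) (Fin (I d)) ℝ) (hP : Pᵀ = P) :
    frobInner I (modeProdSq I A d P) B = frobInner I A (modeProdSq I B d P) := by
  rw [frobInner_eq_trace I _ _ d, frobInner_eq_trace I _ _ d, matricization_modeProdSq,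
    matricization_modeProdSq, Matrix.transpose_mul, hP, Matrix.mul_assoc, Matrix.trace_mul_comm,
    Matrix.mul_assoc]

theorem modeProdSq_modeProdSq (I : Fin D → ℕ) (A : (∀ d, Fin (I d)) → ℝ) (d : Fin D)
    (P Q : Matrix (Fin (I d)) (Fin (I d)) ℝ) :
    modeProdSq I (modeProdSq I A d Q) d P = modeProdSq I A d (P * Q) := by
  funext i
  simp only [modeProdSq, Matrix.mul_apply, Function.update_self, Function.update_idem,
    Finset.mul_sum, Finset.sum_mul]
  rw [Finset.sum_comm]
  exact Finset.sum_congr rfl fun _ _ => Finset.sum_congr rfl fun _ _ => by ring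

theorem modeProdSq_comm (I : Fin D → ℕ) (A : (∀ d, Fin (I d)) → ℝ) {d e : Fin D} (hde : d ≠ e)
    (P : Matrix (Fin (I d)) (Fin (I d)) ℝ) (Q : Matrix (Fin (I e)) (Fin (I e)) ℝ) :
    modeProdSq I (modeProdSq I A e Q) d P = modeProdSq I (modeProdSq I A d P) e Q := by
  funext i
  simp only [modeProdSq, Function.update_of_ne hde, Function.update_of_ne hde.symm,
    Finset.mul_sum]
  rw [Finset.sum_comm]
  refine Finset.sum_congr rfl fun a _ => Finset.sum_congr rfl fun b _ => ?_
  rw [Function.update_comm hde]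
  ring

/-- The truncated projector `U Uᵀ`, written in the full basis: `V E Vᵀ` with `E` the 0-1 diagonal
matrix that selects the first `s` basis vectors. -/
theorem truncProj_eq {n s : ℕ} (hs : s ≤ n) (V : Matrix (Fin n) (Fin n) ℝ)
    (U : Matrix (Fin n) (Fin s) ℝ) (hU : ∀ i j, U i j = V i (Fin.castLE hs j)) :
    U * Uᵀ = V * Matrix.diagonal (fun i : Fin n => if (i : ℕ) < s then (1 : ℝ) else 0) * Vᵀ := by
  ext a b
  rw [Matrix.mul_apply, Matrix.mul_apply]
  simp only [Matrix.mul_diagonal, Matrix.transpose_apply, hU, mul_ite, mul_one, mul_zero,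
    ite_mul, zero_mul]
  rw [← Finset.sum_filter]
  refine Finset.sum_bij (fun j _ => Fin.castLE hs j) ?_ ?_ ?_ ?_
  · intro j _
    simp
  · intro j _ k _ h
    exact Fin.castLE_injective hs h
  · intro i hi
    exact ⟨⟨i, (Finset.mem_filter.mp hi).2⟩, Finset.mem_univ _, rfl⟩
  · intro j _
    rfl

theorem truncProj_idem {n s : ℕ} (hs : s ≤ n) (V : Matrix (Fin n) (Fin n) ℝ)
    (hV : Vᵀ * V = 1) (U : Matrix (Fin n) (Fin s) ℝ)
    (hU : ∀ i j, U i j = V i (Fin.castLE hs j)) :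
    U * Uᵀ * (U * Uᵀ) = U * Uᵀ := by
  have h : Uᵀ * U = 1 := by
    ext a b
    have := congrFun (congrFun hV (Fin.castLE hs a)) (Fin.castLE hs b)
    simpa [Matrix.mul_apply, Matrix.one_apply, hU] using this
  rw [Matrix.mul_assoc, ← Matrix.mul_assoc Uᵀ, h, Matrix.one_mul]

theorem trace_conj_diagonal {n : ℕ} (V : Matrix (Fin n) (Fin n) ℝ) (hV : Vᵀ * V = 1)
    (w : Fin n → ℝ) : (V * Matrix.diagonal w * Vᵀ).trace = ∑ i, w i := by
  rw [Matrix.mul_assoc, Matrix.trace_mul_comm, Matrix.mul_assoc, hV, Matrix.mul_one,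
    Matrix.trace_diagonal]

/-- The loss of trace of `G = V diag(w) Vᵀ` under the projector onto the first `s` columns of `V`
is the tail sum of `w`. -/
theorem trace_sub_trace_truncProj {n s : ℕ} (hs : s ≤ n) (V : Matrix (Fin n) (Fin n) ℝ)
    (hV : Vᵀ * V = 1) (U : Matrix (Fin n) (Fin s) ℝ)
    (hU : ∀ i j, U i j = V i (Fin.castLE hs j)) (w : Fin n → ℝ) :
    (V * Matrix.diagonal w * Vᵀ).trace - (U * Uᵀ * (V * Matrix.diagonal w * Vᵀ)).trace =
      ∑ i ∈ Finset.univ.filter fun i : Fin n => s ≤ (i : ℕ), w i := by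
  have h : ∀ E F : Matrix (Fin n) (Fin n) ℝ,
      V * E * Vᵀ * (V * F * Vᵀ) = V * (E * F) * Vᵀ := by
    intro E F
    calc V * E * Vᵀ * (V * F * Vᵀ) = V * E * (Vᵀ * V) * F * Vᵀ := by
          simp only [Matrix.mul_assoc]
      _ = V * (E * F) * Vᵀ := by rw [hV]; simp only [Matrix.mul_assoc, Matrix.one_mul]
  rw [truncProj_eq hs V U hU, h, Matrix.diagonal_mul_diagonal, trace_conj_diagonal V hV,
    trace_conj_diagonal V hV, ← Finset.sum_sub_distrib, Finset.sum_filter]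
  refine Finset.sum_congr rfl fun i _ => ?_
  by_cases hi : (i : ℕ) < s
  · simp [hi]
  · simp [hi, not_lt.mp hi]

theorem sum_castSucc_sub_succ {n : ℕ} (f : Fin (n + 1) → ℝ) :
    ∑ d : Fin n, (f d.castSucc - f d.succ) = f 0 - f (Fin.last n) := by
  have h := (Fin.sum_univ_castSucc f).symm.trans (Fin.sum_univ_succ f)
  rw [Finset.sum_sub_distrib]
  linarith

/-- **Theorem 3.4.** The sequentially truncated HOSVD approximation
`Â = Â_D` satisfies `‖A − Â‖_F² = Σ_{d=1}^{D} Σ_{i=S_d+1}^{I_d} σ_d(i)²`. -/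
theorem sthosvd_error
    (I : Fin D → ℕ) (A : (∀ d, Fin (I d)) → ℝ)
    -- the truncation ranks
    (Sr : Fin D → ℕ) (hSr : ∀ d, Sr d ≤ I d)
    -- the sequence of partially truncated tensors `Â₀ = A, …, Â_D`
    (Ahat : Fin (D + 1) → (∀ d, Fin (I d)) → ℝ)
    -- full sets of left singular vectors and singular values of the mode-`d`
    -- matricization `M_d` of `Â_{d-1}`: `Ufull d` is orthogonal, `σ d` is a
    -- nonincreasing nonnegative vector and `M_d M_dᵀ = Ufull d diag(σ d ²) (Ufull d)ᵀ`
    (Ufull : ∀ d : Fin D, Matrix (Fin (I d)) (Fin (I d)) ℝ)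
    (σ : ∀ d : Fin D, Fin (I d) → ℝ)
    (hUorth : ∀ d : Fin D, (Ufull d)ᵀ * Ufull d = 1)
    (hσnonneg : ∀ (d : Fin D) (i : Fin (I d)), 0 ≤ σ d i)
    (hσmono : ∀ (d : Fin D) (i j : Fin (I d)), i ≤ j → σ d j ≤ σ d i)
    (hgram : ∀ d : Fin D,
      matricization I (Ahat d.castSucc) d * (matricization I (Ahat d.castSucc) d)ᵀ =
        Ufull d * Matrix.diagonal (fun i => σ d i ^ 2) * (Ufull d)ᵀ)
    -- `U d` consists of the leading `Sr d` left singular vectors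
    (U : ∀ d : Fin D, Matrix (Fin (I d)) (Fin (Sr d)) ℝ)
    (hU : ∀ (d : Fin D) (i : Fin (I d)) (j : Fin (Sr d)),
      U d i j = Ufull d i (Fin.castLE (hSr d) j))
    -- the sequential truncation recursion `Â_d = Â_{d-1} ×_d (U_d U_dᵀ)`
    (hA0 : Ahat 0 = A)
    (hstep : ∀ d : Fin D,
      Ahat d.succ = modeProdSq I (Ahat d.castSucc) d (U d * (U d)ᵀ)) :
    frobSq I (fun i => A i - Ahat (Fin.last D) i) =
      ∑ d : Fin D,
        ∑ i ∈ Finset.univ.filter fun i : Fin (I d) => Sr d ≤ (i : ℕ), σ d i ^ 2 := by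
  have hsymm : ∀ d, (U d * (U d)ᵀ)ᵀ = U d * (U d)ᵀ := fun d => by simp
  have hidem : ∀ d, U d * (U d)ᵀ * (U d * (U d)ᵀ) = U d * (U d)ᵀ := fun d =>
    truncProj_idem (hSr d) (Ufull d) (hUorth d) (U d) (hU d)
  have hfix : ∀ (k : Fin (D + 1)) (j : Fin D), j.castSucc < k →
      modeProdSq I (Ahat k) j (U j * (U j)ᵀ) = Ahat k := by
    intro k
    induction k using Fin.induction with
    | zero => exact fun j hj => absurd hj (Fin.not_lt_zero _)
    | succ d ih =>
      intro j hj
      rw [hstep d]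
      rcases (Fin.castSucc_lt_succ_iff.mp hj).lt_or_eq with h | rfl
      · rw [modeProdSq_comm I _ h.ne, ih j (Fin.castSucc_lt_castSucc_iff.mpr h)]
      · rw [modeProdSq_modeProdSq, hidem]
  have hinner : ∀ (k : Fin (D + 1)) (Y : (∀ d, Fin (I d)) → ℝ),
      (∀ j : Fin D, j.castSucc < k → modeProdSq I Y j (U j * (U j)ᵀ) = Y) →
      frobInner I A Y = frobInner I (Ahat k) Y := by
    intro k
    induction k using Fin.induction with
    | zero => exact fun Y _ => by rw [hA0]
    | succ d ih =>
      intro Y hY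
      rw [ih Y fun j hj => hY j (hj.trans Fin.castSucc_lt_succ), hstep d,
        frobInner_modeProdSq I _ _ d _ (hsymm d), hY d Fin.castSucc_lt_succ]
  have hloss : ∀ d : Fin D, frobSq I (Ahat d.castSucc) - frobSq I (Ahat d.succ) =
      ∑ i ∈ Finset.univ.filter fun i : Fin (I d) => Sr d ≤ (i : ℕ), σ d i ^ 2 := by
    intro d
    -- `‖P X‖² = ⟨P X, X⟩`, since `P` is a self-adjoint idempotent
    have h : frobSq I (Ahat d.succ) =
        frobInner I (modeProdSq I (Ahat d.castSucc) d (U d * (U d)ᵀ)) (Ahat d.castSucc) := by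
      rw [frobSq_eq_frobInner, hstep d, ← frobInner_modeProdSq I _ _ d _ (hsymm d),
        modeProdSq_modeProdSq, hidem]
    rw [h, frobSq_eq_frobInner, frobInner_eq_trace I _ _ d, frobInner_eq_trace I _ _ d,
      matricization_modeProdSq, Matrix.mul_assoc, hgram d]
    exact trace_sub_trace_truncProj (hSr d) (Ufull d) (hUorth d) (U d) (hU d) _
  rw [frobSq_sub, hinner (Fin.last D) _ (hfix (Fin.last D)), ← frobSq_eq_frobInner,
    ← Finset.sum_congr rfl fun d _ => hloss d,
    sum_castSucc_sub_succ fun k => frobSq I (Ahat k), hA0]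
  ring
end
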